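/- Let G be a nonelementary hyperbolic group and let H₁, …, H_l be infinite quasiconvex subgroups of G. Let g₁, g₂ ∈ G be infinite-order elements whose fixed point sets {g₁^{±∞}} and {g₂^{±∞}} in ∂G are disjoint, and suppose that for every i ∈ {1, …, l} and j ∈ {1, 2}, no nonzero power of g_j is conjugate in G to an element of H_i. Then there is m ∈ ℕ such that: (1) ⟨g₁^m, g₂^m⟩ is a free subgroup of G of rank 2; and (2) ⟨g₁^m, g₂^m⟩ ∩ g⁻¹H_i g = {1} for all g ∈ G and all i ∈ {1, …, l}. -/

import Mathlib

/-!
The word metric of a hyperbolic group is used only through a few properties, collected in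
`HypGeom`: left invariance, finite balls, geodesics, and the four point condition.

**Broken geodesics.** Consider a product `s₁ s₂ ⋯ sₙ` as a broken path from `1`. If every step is
long compared with the Gromov products at the corners between consecutive steps, then the path
makes definite progress at each step (`length_le_of_chain`), and each of its corners is seen from
the two endpoints under a bounded Gromov product, so it is near a geodesic between the endpoints
(`gp_chain_le`). The bound depends on the corner constant and on `δ` only, not on the length of
the steps.

**Infinite order elements are loxodromic.** If the square of every power of `g` translated every
point by hardly more than the power itself does, then small powers of `g`, which commute with a
very long power `Q` of `g`, would move a point deep inside a geodesic `[1, Q]` by at most `9 * δ`,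
which is impossible for more powers than there are elements in the ball of that radius. So some
conjugate of a power of `g` has a corner small compared with its length (`exists_stretch`), and
its powers form a broken geodesic. Hence the products `(g⁻ⁱ | gʲ)` are bounded
(`exists_gp_neg_pos_le`). Together with the disjointness of the fixed points this bounds all
corners between powers of `g₁` and `g₂` without backtracking by one constant `C`
(`exists_corner_bound`).

**Freeness.** For large `m`, a nontrivial reduced word in `g₁ᵐ` and `g₂ᵐ` is a broken geodesic with
long steps and corners at most `C`, so it is not `1` (`lift_injective`).

**Trivial intersections.** Suppose that a conjugate of a nontrivial element of `⟨g₁ᵐ, g₂ᵐ⟩` lies in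
`H = H_i`. After a further conjugation the element is a cyclically reduced word `U`, with
`a U a⁻¹ ∈ H`. Cut the first syllable `g_c^{± m}` of a period of `U^{2N + 1}` in the middle into
`g_c^{± j} g_c^{± (m - j)}`, both parts being long. The cut point is a corner bounded by `C` of the
same kind of path (`exists_axis_split`), so it is near the geodesic between the endpoints, and for
large `N` its translate by `a` is near a geodesic between points of `H`. By quasiconvexity it is
within a distance `K` of `H`, where `K` does not depend on `m` (`exists_near_subgroup`). If `m`
is large compared with the number of elements of the ball of radius `K`, the pigeonhole principle
gives `j ≠ j'` for which the same element `u` of the ball leads from both cut points into `H`.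
Then `u⁻¹ g_c^{± (j' - j)} u ∈ H`, contrary to the hypothesis on powers of `g_c`
(`conj_notMem`).
-/

open Set Pointwise

namespace HypPaper

variable {G : Type*} [Group G]

/-- The distance between `g` and `h` in the Cayley graph of `G` with respect to the
(symmetrized) generating set `T`, i.e. the word metric: the least length of a word in
`T ∪ T⁻¹` carrying `g` to `h`. -/
noncomputable def wdist (T : Set G) (g h : G) : ℕ :=
  sInf {n : ℕ | ∃ l : List G, l.length = n ∧ (∀ x ∈ l, x ∈ T ∨ x⁻¹ ∈ T) ∧ g * l.prod = h}

/-- The Gromov product `(x|y)_w` with respect to a distance function `d`. -/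
noncomputable def gp (d : G → G → ℕ) (w x y : G) : ℝ :=
  ((d w x : ℝ) + (d w y : ℝ) - (d x y : ℝ)) / 2

/-- Gromov hyperbolicity of the metric `d` (Gromov's four point condition, which for the
word metric of a Cayley graph is equivalent to the `δ`-slimness of all geodesic triangles). -/
def IsHypDist (d : G → G → ℕ) : Prop :=
  ∃ δ : ℝ, 0 ≤ δ ∧ ∀ w x y z : G,
    min (gp d w x z) (gp d w y z) - δ ≤ gp d w x y

/-- A group is hyperbolic if its Cayley graph with respect to some (equivalently, any)
finite generating set is Gromov hyperbolic. -/
def IsHyperbolicGroup (G : Type*) [Group G] : Prop :=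
  ∃ S : Finset G, Subgroup.closure (S : Set G) = ⊤ ∧ IsHypDist (wdist (S : Set G))

/-- A group is virtually cyclic if it has a cyclic subgroup of finite index.
A hyperbolic group is nonelementary iff it is not virtually cyclic. -/
def VirtuallyCyclic (G : Type*) [Group G] : Prop :=
  ∃ C : Subgroup G, C.index ≠ 0 ∧ IsCyclic C

/-- `p 0, p 1, ..., p n` is the vertex sequence of a geodesic (w.r.t. `d`). -/
def IsGeodesicSeq (d : G → G → ℕ) (n : ℕ) (p : ℕ → G) : Prop :=
  ∀ i j : ℕ, i ≤ j → j ≤ n → d (p i) (p j) = j - i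

/-- A subset `A` is quasiconvex w.r.t. the metric `d`: there is `k ≥ 0` such that every
geodesic joining two points of `A` lies in the `k`-neighborhood of `A`. -/
def IsQuasiconvex (d : G → G → ℕ) (A : Set G) : Prop :=
  ∃ k : ℕ, ∀ (n : ℕ) (p : ℕ → G), IsGeodesicSeq d n p → p 0 ∈ A → p n ∈ A →
    ∀ i ≤ n, ∃ a ∈ A, d (p i) a ≤ k

/-- A subgroup `H` of `G` is weakly malnormal if it is infinite and `H ∩ gHg⁻¹` is finite
for every `g ∈ G \ H`. -/
def WeaklyMalnormal (H : Subgroup G) : Prop :=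
  (H : Set G).Infinite ∧ ∀ g : G, g ∉ H →
    ((H ⊓ ConjAct.toConjAct g • H : Subgroup G) : Set G).Finite

/-- A sequence in `G` converging at infinity: Gromov products `(aᵢ|aⱼ)₁ → ∞`. -/
def ConvAtInf (d : G → G → ℕ) (a : ℕ → G) : Prop :=
  ∀ M : ℝ, ∃ N : ℕ, ∀ i ≥ N, ∀ j ≥ N, M ≤ gp d 1 (a i) (a j)

/-- Two sequences converge to the same point at infinity: `(aᵢ|bⱼ)₁ → ∞`. -/
def SeqEquiv (d : G → G → ℕ) (a b : ℕ → G) : Prop :=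
  ∀ M : ℝ, ∃ N : ℕ, ∀ i ≥ N, ∀ j ≥ N, M ≤ gp d 1 (a i) (b j)

/-- Sequences converging at infinity. -/
def BSeq (G : Type*) [Group G] (d : G → G → ℕ) := {a : ℕ → G // ConvAtInf d a}

/-- The (sequential) Gromov boundary `∂G` of `G` w.r.t. the word metric `d`:
equivalence classes of sequences converging at infinity. -/
def Boundary (G : Type*) [Group G] (d : G → G → ℕ) :=
  Quot (fun a b : BSeq G d => SeqEquiv d a.1 b.1)

/-- The boundary point determined by a sequence converging at infinity. -/
def toBoundary (d : G → G → ℕ) (b : BSeq G d) : Boundary G d :=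
  Quot.mk _ b

/-- A basic neighborhood in the boundary: points which can be represented by a sequence
whose Gromov products with (a representative of) the given point eventually exceed `M`. -/
def basicNbhd (d : G → G → ℕ) (a : BSeq G d) (M : ℝ) : Set (Boundary G d) :=
  {ξ | ∃ b : BSeq G d, toBoundary d b = ξ ∧
        ∃ N : ℕ, ∀ i ≥ N, ∀ j ≥ N, M ≤ gp d 1 (a.1 i) (b.1 j)}

/-- The standard topology on the Gromov boundary. -/
instance (d : G → G → ℕ) : TopologicalSpace (Boundary G d) :=
  TopologicalSpace.generateFrom {U | ∃ a M, U = basicNbhd d a M}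

/-- The limit set `Λ(A) ⊆ ∂G` of a subset `A ⊆ G`: boundary points which are limits of
sequences of points of `A`. -/
def limitSet (d : G → G → ℕ) (A : Set G) : Set (Boundary G d) :=
  {ξ | ∃ b : BSeq G d, (∀ n, b.1 n ∈ A) ∧ toBoundary d b = ξ}

/-! ### Word metrics as left-invariant hyperbolic geometries -/

/-- The properties of the word metric of a hyperbolic group that the argument uses: a
left-invariant pseudometric with finite balls, discrete geodesics between any two points, and
Gromov's four point condition with constant `δ`. -/
structure HypGeom (d : G → G → ℕ) (δ : ℝ) : Prop where
  nonneg : 0 ≤ δ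
  self : ∀ x, d x x = 0
  comm : ∀ x y, d x y = d y x
  tri : ∀ x y z, d x z ≤ d x y + d y z
  inv : ∀ g x y, d (g * x) (g * y) = d x y
  ball : ∀ n : ℕ, {x | d 1 x ≤ n}.Finite
  geo : ∀ x y, ∃ p : ℕ → G, IsGeodesicSeq d (d x y) p ∧ p 0 = x ∧ p (d x y) = y
  hyp : ∀ w x y z : G, min (gp d w x z) (gp d w y z) - δ ≤ gp d w x y

lemma exists_word {S : Set G} (hgen : Subgroup.closure S = ⊤) (x : G) :
    ∃ l : List G, (∀ y ∈ l, y ∈ S ∨ y⁻¹ ∈ S) ∧ l.prod = x := by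
  have hx : x ∈ Subgroup.closure S := by rw [hgen]; trivial
  induction hx using Subgroup.closure_induction with
  | mem x hx => exact ⟨[x], by simp [hx], by simp⟩
  | one => exact ⟨[], by simp, by simp⟩
  | mul x y _ _ ihx ihy =>
    obtain ⟨l, hl, rfl⟩ := ihx
    obtain ⟨l', hl', rfl⟩ := ihy
    refine ⟨l ++ l', fun z hz => ?_, by simp⟩
    rcases List.mem_append.1 hz with h | h
    exacts [hl z h, hl' z h]
  | inv x _ ih =>
    obtain ⟨l, hl, rfl⟩ := ih
    refine ⟨(l.map fun x => x⁻¹).reverse, fun z hz => ?_, (List.prod_inv_reverse l).symm⟩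
    simp only [List.mem_reverse, List.mem_map] at hz
    obtain ⟨a, ha, rfl⟩ := hz
    simpa [or_comm] using hl a ha

lemma wdist_le {S : Set G} {x y : G} (l : List G) (hl : ∀ z ∈ l, z ∈ S ∨ z⁻¹ ∈ S)
    (h : x * l.prod = y) : wdist S x y ≤ l.length :=
  Nat.sInf_le ⟨l, rfl, hl, h⟩

lemma exists_min_word {S : Set G} (hgen : Subgroup.closure S = ⊤) (x y : G) :
    ∃ l : List G, l.length = wdist S x y ∧ (∀ z ∈ l, z ∈ S ∨ z⁻¹ ∈ S) ∧ x * l.prod = y := by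
  have hne : {n : ℕ | ∃ l : List G, l.length = n ∧ (∀ z ∈ l, z ∈ S ∨ z⁻¹ ∈ S) ∧
      x * l.prod = y}.Nonempty := by
    obtain ⟨l, hl, hp⟩ := exists_word hgen (x⁻¹ * y)
    exact ⟨_, l, rfl, hl, by rw [hp]; group⟩
  exact Nat.sInf_mem hne

lemma wdist_comm_le {S : Set G} (hgen : Subgroup.closure S = ⊤) (x y : G) :
    wdist S y x ≤ wdist S x y := by
  obtain ⟨l, hl, hS, hp⟩ := exists_min_word hgen x y
  rw [← hl]
  have := wdist_le (S := S) (x := y) (y := x) (l.map fun x => x⁻¹).reverse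
    (by
      intro z hz
      simp only [List.mem_reverse, List.mem_map] at hz
      obtain ⟨a, ha, rfl⟩ := hz
      simpa [or_comm] using hS a ha)
    (by rw [← List.prod_inv_reverse, ← hp]; group)
  simpa using this

lemma wdist_tri {S : Set G} (hgen : Subgroup.closure S = ⊤) (x y z : G) :
    wdist S x z ≤ wdist S x y + wdist S y z := by
  obtain ⟨l, hl, hS, hp⟩ := exists_min_word hgen x y
  obtain ⟨l', hl', hS', hp'⟩ := exists_min_word hgen y z
  rw [← hl, ← hl', ← List.length_append]
  apply wdist_le
  · intro w hw
    rcases List.mem_append.1 hw with h | h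
    exacts [hS w h, hS' w h]
  · rw [List.prod_append, ← mul_assoc, hp, hp']

lemma wdist_ball (S : Finset G) (hgen : Subgroup.closure (S : Set G) = ⊤) (n : ℕ) :
    {x | wdist (S : Set G) 1 x ≤ n}.Finite := by
  classical
  have hT : {s : G | s ∈ (S : Set G) ∨ s⁻¹ ∈ (S : Set G)}.Finite :=
    S.finite_toSet.union (S.finite_toSet.preimage inv_injective.injOn)
  have : Finite {s : G | s ∈ (S : Set G) ∨ s⁻¹ ∈ (S : Set G)} := hT
  refine ((List.finite_length_le {s : G | s ∈ (S : Set G) ∨ s⁻¹ ∈ (S : Set G)} n).image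
    (fun l => (l.map Subtype.val).prod)).subset ?_
  intro x hx
  obtain ⟨l, hl, hS, hp⟩ := exists_min_word hgen 1 x
  lift l to List {s : G | s ∈ (S : Set G) ∨ s⁻¹ ∈ (S : Set G)} using hS
  refine ⟨l, ?_, by simpa using hp⟩
  rw [List.length_map] at hl
  exact hl.trans_le hx

lemma wdist_geo {S : Set G} (hgen : Subgroup.closure S = ⊤) (x y : G) :
    ∃ p : ℕ → G, IsGeodesicSeq (wdist S) (wdist S x y) p ∧ p 0 = x ∧
      p (wdist S x y) = y := by
  obtain ⟨l, hl, hS, hp⟩ := exists_min_word hgen x y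
  have key : ∀ i j, i ≤ j → j ≤ l.length →
      wdist S (x * (l.take i).prod) (x * (l.take j).prod) ≤ j - i := by
    intro i j hij hj
    have h1 : l.take j = l.take i ++ (l.take j).drop i := by
      conv_lhs => rw [← List.take_append_drop i (l.take j), List.take_take, min_eq_left hij]
    have := wdist_le (S := S) (x := x * (l.take i).prod) (y := x * (l.take j).prod)
      ((l.take j).drop i)
      (fun z hz => hS z (List.mem_of_mem_take (List.mem_of_mem_drop hz)))
      (by conv_rhs => rw [h1, List.prod_append, ← mul_assoc])
    simpa [hj] using this
  refine ⟨fun i => x * (l.take i).prod, ?_, by simp, ?_⟩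
  swap
  · show x * (l.take (wdist S x y)).prod = y
    rw [← hl, List.take_length, hp]
  intro i j hij hj
  rw [← hl] at hj
  have a1 := key i j hij hj
  have a2 := key 0 i (Nat.zero_le _) (hij.trans hj)
  have a3 := key j l.length hj le_rfl
  have t1 := wdist_tri hgen (x * (l.take 0).prod) (x * (l.take i).prod) (x * (l.take l.length).prod)
  have t2 := wdist_tri hgen (x * (l.take i).prod) (x * (l.take j).prod) (x * (l.take l.length).prod)
  have e : wdist S (x * (l.take 0).prod) (x * (l.take l.length).prod) = l.length := by
    rw [List.take_zero, List.take_length, List.prod_nil, mul_one, hp, hl]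
  show wdist S (x * (l.take i).prod) (x * (l.take j).prod) = j - i
  omega

lemma hypGeom_wdist (S : Finset G) (hgen : Subgroup.closure (S : Set G) = ⊤) {δ : ℝ}
    (hδ : 0 ≤ δ) (h : ∀ w x y z : G, min (gp (wdist (S : Set G)) w x z)
      (gp (wdist (S : Set G)) w y z) - δ ≤ gp (wdist (S : Set G)) w x y) :
    HypGeom (wdist (S : Set G)) δ where
  nonneg := hδ
  self x := by simpa using wdist_le (S := (S : Set G)) (x := x) (y := x) [] (by simp) (by simp)
  comm x y := le_antisymm (wdist_comm_le hgen y x) (wdist_comm_le hgen x y)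
  tri := wdist_tri hgen
  inv g x y := by simp [wdist, mul_assoc]
  ball := wdist_ball S hgen
  geo := wdist_geo hgen
  hyp := h

/-! ### Elementary inequalities for Gromov products -/

namespace HypGeom

variable {d : G → G → ℕ} {δ : ℝ}

lemma triR (hd : HypGeom d δ) (x y z : G) : (d x z : ℝ) ≤ d x y + d y z := by
  exact_mod_cast hd.tri x y z

lemma gp_comm (hd : HypGeom d δ) (w x y : G) : gp d w x y = gp d w y x := by
  simp only [gp, hd.comm x y]; ring

lemma gp_nonneg (hd : HypGeom d δ) (w x y : G) : 0 ≤ gp d w x y := by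
  have := hd.triR x w y
  rw [hd.comm x w] at this
  simp only [gp]; linarith

lemma gp_le_left (hd : HypGeom d δ) (w x y : G) : gp d w x y ≤ d w x := by
  have := hd.triR w x y
  simp only [gp]; linarith

lemma gp_le_right (hd : HypGeom d δ) (w x y : G) : gp d w x y ≤ d w y := by
  rw [hd.gp_comm]; exact hd.gp_le_left w y x

lemma gp_mul (hd : HypGeom d δ) (g w x y : G) :
    gp d (g * w) (g * x) (g * y) = gp d w x y := by
  simp only [gp, hd.inv]

/-- The products at the two ends of the side `[1, x]` of the triangle `1, x, x * y` add up to the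
length of that side. -/
lemma gp_flip (hd : HypGeom d δ) (x y : G) :
    gp d 1 x (x * y) = d 1 x - gp d 1 x⁻¹ y := by
  rw [← hd.gp_mul x 1 x⁻¹ y]
  simp only [gp, mul_one, mul_inv_cancel, hd.comm x 1]
  ring

lemma len_inv (hd : HypGeom d δ) (x : G) : d 1 x⁻¹ = d 1 x := by
  rw [← hd.inv x 1 x⁻¹]; simp [hd.comm]

lemma len_mul (hd : HypGeom d δ) (x y : G) :
    (d 1 (x * y) : ℝ) = d 1 x + d 1 y - 2 * gp d 1 x⁻¹ y := by
  have := hd.gp_flip x y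
  have h2 := hd.inv x 1 y
  simp only [gp, mul_one] at this h2 ⊢
  rw [h2] at this
  linarith

/-- The four point condition in the form in which one of the two products on the left is known
to be large. -/
lemma gp_le_of_left (hd : HypGeom d δ) {w x y z : G} {c : ℝ} (h : gp d w x y ≤ c)
    (hl : c + δ < gp d w x z) : gp d w y z ≤ c + δ := by
  have := hd.hyp w x y z
  rcases min_cases (gp d w x z) (gp d w y z) with ⟨h1, _⟩ | ⟨h1, _⟩ <;> rw [h1] at this <;> linarith

/-- The four point condition in terms of distances. -/
lemma four (hd : HypGeom d δ) (x y z w : G) :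
    (d x y : ℝ) + d z w ≤ d x z + d y w + 2 * δ ∨ (d x y : ℝ) + d z w ≤ d x w + d y z + 2 * δ := by
  have := hd.hyp w x y z
  simp only [gp, hd.comm w] at this
  rcases min_cases ((d x w + d z w - d x z : ℝ) / 2) ((d y w + d z w - d y z : ℝ) / 2)
    with ⟨h1, _⟩ | ⟨h1, _⟩ <;> rw [h1] at this
  · left; linarith
  · right; linarith

lemma gp_lip_base (hd : HypGeom d δ) (w w' x y : G) :
    gp d w x y ≤ gp d w' x y + d w w' := by
  have h1 := hd.triR w w' x
  have h2 := hd.triR w w' y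
  simp only [gp]; linarith

lemma gp_lip_left (hd : HypGeom d δ) (w x x' y : G) :
    gp d w x y ≤ gp d w x' y + d x x' := by
  have h1 := hd.triR w x' x
  have h2 := hd.triR x' x y
  rw [hd.comm x' x] at h1 h2
  simp only [gp]; linarith

lemma gp_lip_right (hd : HypGeom d δ) (w x y y' : G) :
    gp d w x y ≤ gp d w x y' + d y y' := by
  rw [hd.gp_comm w x y, hd.gp_comm w x y']; exact hd.gp_lip_left w y y' x

/-- A point seeing `x` and `y` under a small Gromov product is close to every geodesic
from `x` to `y`. -/
lemma exists_near_geodesic (hd : HypGeom d δ) {x y : G} {p : ℕ → G}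
    (hp : IsGeodesicSeq d (d x y) p) (h0 : p 0 = x) (h1 : p (d x y) = y) (z : G) :
    ∃ i ≤ d x y, (d z (p i) : ℝ) ≤ gp d z x y + 2 * δ + 1 := by
  have t1 := hd.tri x z y
  have t2 := hd.tri x y z
  have t3 := hd.tri y x z
  rw [hd.comm y x] at t3
  rw [hd.comm z y] at t1
  -- the point at distance `⌊(z | y)_x⌋` from `x`
  set t := (d x y + d x z - d y z) / 2 with ht
  have hle : t ≤ d x y := by omega
  refine ⟨t, hle, ?_⟩
  have e1 : d x (p t) = t := by have := hp 0 t (Nat.zero_le _) hle; rwa [h0, Nat.sub_zero] at this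
  have e2 : d (p t) y = d x y - t := by have := hp t _ hle le_rfl; rwa [h1] at this
  have e1' : (d x (p t) : ℝ) = t := by exact_mod_cast e1
  have e2' : (d (p t) y : ℝ) = d x y - t := by rw [e2]; push_cast [hle]; ring
  have b1 : (d x y + d x z : ℝ) ≤ d y z + 2 * t + 1 := by
    have : d x y + d x z ≤ d y z + 2 * t + 1 := by omega
    exact_mod_cast this
  have b2 : (2 * t + d y z : ℝ) ≤ d x y + d x z := by
    have : 2 * t + d y z ≤ d x y + d x z := by omega
    exact_mod_cast this
  simp only [gp]
  rw [hd.comm z x, hd.comm z y]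
  rcases hd.four x y z (p t) with h | h
  · rw [hd.comm y (p t)] at h; linarith
  · linarith

end HypGeom

/-! ### Broken geodesics with long pieces and small corners -/

/-- Consecutive steps of a broken path which is locally close to a geodesic: both steps have
length at least `L`, and the Gromov product at the corner between them is at most `C`. -/
def Corner (d : G → G → ℕ) (C L : ℝ) (s t : G) : Prop :=
  gp d 1 s⁻¹ t ≤ C ∧ L ≤ d 1 s ∧ L ≤ d 1 t

namespace HypGeom

variable {d : G → G → ℕ} {δ : ℝ} {C L : ℝ}

lemma corner_inv (hd : HypGeom d δ) {s t : G} (h : Corner d C L s t) :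
    Corner d C L t⁻¹ s⁻¹ := by
  refine ⟨?_, ?_, ?_⟩
  · rw [inv_inv, hd.gp_comm]; exact h.1
  · rw [hd.len_inv]; exact h.2.2
  · rw [hd.len_inv]; exact h.2.1

/-- The endpoint of a chain is seen from its origin in the direction of the first step. -/
lemma gp_first (hd : HypGeom d δ) (hC : 0 ≤ C) (hL : 2 * C + 2 * δ < L) :
    ∀ (l : List G) (a : G), L ≤ d 1 a → (a :: l).IsChain (Corner d C L) →
      L - C - δ ≤ gp d 1 a (a :: l).prod := by
  intro l
  induction l with
  | nil =>
    intro a ha h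
    have hδ := hd.nonneg
    have h2 := hd.gp_flip a 1
    have h3 := hd.gp_le_right 1 a⁻¹ 1
    rw [hd.self] at h3
    rw [List.prod_cons, List.prod_nil, h2]
    push_cast at h3
    linarith
  | cons b l ih =>
    intro a ha h
    obtain ⟨hab, hch⟩ := List.isChain_cons_cons.1 h
    have h1 := ih b hab.2.2 hch
    have h2 := hd.gp_le_of_left (by rw [hd.gp_comm]; exact hab.1)
      (show C + δ < gp d 1 b (b :: l).prod by linarith)
    rw [List.prod_cons, hd.gp_flip]
    linarith

lemma length_le_of_chain (hd : HypGeom d δ) (hC : 0 ≤ C) (hL : 2 * C + 2 * δ + 1 ≤ L) :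
    ∀ (l : List G) (a : G), L ≤ d 1 a → (a :: l).IsChain (Corner d C L) →
      ((a :: l).length : ℝ) ≤ d 1 (a :: l).prod := by
  intro l
  have hδ := hd.nonneg
  induction l with
  | nil =>
    intro a ha _
    simp only [List.length_singleton, Nat.cast_one, List.prod_singleton]
    linarith
  | cons b l ih =>
    intro a ha h
    obtain ⟨hab, hch⟩ := List.isChain_cons_cons.1 h
    have h0 := ih b hab.2.2 hch
    have h1 := hd.gp_first hC (by linarith) l b hab.2.2 hch
    have h2 := hd.gp_le_of_left (by rw [hd.gp_comm]; exact hab.1)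
      (show C + δ < gp d 1 b (b :: l).prod by linarith)
    rw [List.prod_cons, hd.len_mul, List.length_cons]
    push_cast
    linarith

lemma chain_inv (hd : HypGeom d δ) {A : List G} {s : G}
    (h : (A ++ [s]).IsChain (Corner d C L)) :
    (s⁻¹ :: (A.map fun x => x⁻¹).reverse).IsChain (Corner d C L) := by
  have : s⁻¹ :: (A.map fun x => x⁻¹).reverse = ((A ++ [s]).map fun x => x⁻¹).reverse := by simp
  rw [this, List.isChain_reverse, List.isChain_map]
  exact h.imp fun a b hab => hd.corner_inv hab

/-- A chain stays close, at each of its corners, to a geodesic between its endpoints: seen from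
the corner between `s` and `t`, the Gromov product of the endpoints is bounded in terms of the
local constant `C` only. -/
lemma gp_chain_le (hd : HypGeom d δ) (hC : 0 ≤ C) (hL : 2 * C + 3 * δ < L)
    {A B : List G} {s t : G} (hA : (A ++ [s]).IsChain (Corner d C L))
    (hB : (t :: B).IsChain (Corner d C L)) (hst : Corner d C L s t) :
    gp d 1 (A ++ [s]).prod⁻¹ (t :: B).prod ≤ C + 2 * δ := by
  have hδ := hd.nonneg
  have hA' := hd.gp_first hC (by linarith) _ _ (by rw [hd.len_inv]; exact hst.2.1)
    (hd.chain_inv hA)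
  have e : (s⁻¹ :: (A.map fun x => x⁻¹).reverse).prod = (A ++ [s]).prod⁻¹ := by
    rw [List.prod_inv_reverse]; simp
  rw [e] at hA'
  have hB' := hd.gp_first hC (by linarith) _ _ hst.2.2 hB
  have h1 := hd.gp_le_of_left hst.1 (show C + δ < gp d 1 s⁻¹ (A ++ [s]).prod⁻¹ by linarith)
  have h2 := hd.gp_le_of_left (z := (t :: B).prod) h1 (by linarith)
  linarith

/-! ### Elements of infinite order are loxodromic -/

/-- If `h` translates `p` away from a far point `o` by about the full distance `d p (h p)`,
then `h²` translates `p` about twice as far. -/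
lemma double_shift (hd : HypGeom d δ) {o p h : G} {R : ℝ} (hR : (d o (h * o) : ℝ) ≤ R)
    (hop : R + 6 * δ < d o p)
    (hs : (d p (h * p) : ℝ) ≤ d o (h * p) - d o p + 2 * δ) :
    2 * (d p (h * p) : ℝ) - 6 * δ ≤ d p (h * (h * p)) := by
  have hδ := hd.nonneg
  have i1 : (d (h * o) (h * (h * p)) : ℝ) = d o (h * p) := by rw [hd.inv]
  have i2 : (d (h * p) (h * (h * p)) : ℝ) = d p (h * p) := by rw [hd.inv]
  have i3 : (d (h * o) (h * p) : ℝ) = d o p := by rw [hd.inv]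
  have t1 := hd.triR o (h * o) (h * p)
  have t2 := hd.triR o p (h * (h * p))
  have hf := hd.four (h * o) (h * (h * p)) o (h * p)
  rw [hd.comm (h * o) o, hd.comm (h * (h * p)) (h * p), hd.comm (h * (h * p)) o] at hf
  rcases hf with hf | hf <;> linarith

/-- Some power of an element `g` of infinite order translates some point `p` much less than
its square does. Otherwise small powers of `g`, which commute with a very long power `Q`, would
all move the points deep inside a geodesic `[1, Q]` by at most `9 * δ`, which finiteness of balls
forbids. -/
lemma exists_stretch (hd : HypGeom d δ) {g : G} (hg : ¬ IsOfFinOrder g) :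
    ∃ k : ℕ, 0 < k ∧ ∃ p : G,
      (d p (g ^ k * p) : ℝ) + 3 * δ < d p (g ^ k * (g ^ k * p)) := by
  classical
  by_contra! hcon
  have hδ := hd.nonneg
  have hinj := injective_pow_iff_not_isOfFinOrder.2 hg
  set b : ℕ := ⌊9 * δ⌋₊ with hb
  set F := (hd.ball b).toFinset with hF
  set N := F.card + 1 with hN
  set R : ℕ := ∑ i ∈ Finset.range (N + 1), d 1 (g ^ i) with hR
  have hRi : ∀ i ≤ N, d 1 (g ^ i) ≤ R := fun i hi =>
    Finset.single_le_sum (f := fun i => d 1 (g ^ i)) (fun _ _ => Nat.zero_le _)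
      (Finset.mem_range.2 (Nat.lt_succ_of_le hi))
  obtain ⟨T, hT⟩ := exists_nat_gt (R + 6 * δ)
  -- a power of `g` of length at least `2 T`
  obtain ⟨n, hn⟩ : ∃ n : ℕ, 2 * T < d 1 (g ^ n) := by
    by_contra! hall
    exact Set.infinite_of_injective_forall_mem hinj hall (hd.ball (2 * T))
  set Q := g ^ n with hQ
  obtain ⟨γ, hγ, hγ0, hγ1⟩ := hd.geo 1 Q
  set p := γ T with hp
  have hp1 : d 1 p = T := by
    have := hγ 0 T (Nat.zero_le _) (by omega)
    rwa [hγ0, Nat.sub_zero] at this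
  have hp2 : d p Q = d 1 Q - T := by
    have := hγ T _ (by omega) le_rfl
    rwa [hγ1] at this
  have hpQ : (d 1 p : ℝ) + d p Q = d 1 Q := by
    have : d 1 p + d p Q = d 1 Q := by omega
    exact_mod_cast this
  have hfar1 : (R : ℝ) + 6 * δ < d 1 p := by rw [hp1]; exact hT
  have hfar2 : (R : ℝ) + 6 * δ < d Q p := by
    have : (T : ℝ) ≤ d Q p := by
      rw [hd.comm Q p]
      have : T ≤ d p Q := by omega
      exact_mod_cast this
    linarith
  have hmove : ∀ i, 0 < i → i ≤ N → d 1 (p⁻¹ * (g ^ i * p)) ≤ b := by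
    intro i hi0 hiN
    have e : d 1 (p⁻¹ * (g ^ i * p)) = d p (g ^ i * p) := by
      rw [← hd.inv p 1]; simp
    rw [e]
    apply Nat.le_floor
    have hr1 : (d 1 (g ^ i * 1) : ℝ) ≤ R := by rw [mul_one]; exact_mod_cast hRi i hiN
    have hr2 : (d Q (g ^ i * Q) : ℝ) ≤ R := by
      have : g ^ i * Q = Q * g ^ i := by rw [hQ, ← pow_add, ← pow_add, add_comm]
      rw [this]
      have h2 := hd.inv Q 1 (g ^ i)
      rw [mul_one] at h2
      rw [h2]
      exact_mod_cast hRi i hiN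
    have hc := hcon i hi0 p
    have hf := hd.four 1 Q p (g ^ i * p)
    rw [hd.comm Q p] at hf
    rcases hf with hf | hf
    · have := hd.double_shift hr2 hfar2 (by rw [hd.comm Q p]; linarith)
      linarith
    · have := hd.double_shift hr1 hfar1 (by linarith)
      linarith
  obtain ⟨i, hi, j, hj, hij, he⟩ := Finset.exists_ne_map_eq_of_card_lt_of_maps_to
    (s := Finset.Icc 1 N) (t := F) (f := fun i => p⁻¹ * (g ^ i * p)) (by simp [hN])
    (by
      intro i hi
      have hi := Finset.mem_Icc.1 hi
      simp only [hF, Set.Finite.coe_toFinset, Set.mem_ofPred_eq]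
      exact hmove i hi.1 hi.2)
  exact hij (hinj (by simpa using he))

/-- Elements of infinite order of a hyperbolic group are loxodromic: the Gromov product of a
positive and a negative power is bounded. -/
lemma exists_gp_neg_pos_le (hd : HypGeom d δ) {g : G} (hg : ¬ IsOfFinOrder g) :
    ∃ C : ℝ, ∀ i j : ℕ, gp d 1 (g ^ i)⁻¹ (g ^ j) ≤ C := by
  have hδ := hd.nonneg
  obtain ⟨k, hk, p, hp⟩ := hd.exists_stretch hg
  set h := p⁻¹ * g ^ k * p with hh
  have hpow : ∀ q : ℕ, p * h ^ q = g ^ (k * q) * p := by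
    intro q
    have : h ^ q = p⁻¹ * (g ^ k) ^ q * p := by
      have := conj_pow (i := q) (a := p⁻¹) (b := g ^ k)
      rwa [inv_inv] at this
    rw [this, pow_mul]; group
  have hlen : d 1 h = d p (g ^ k * p) := by
    rw [← hd.inv p 1 h, mul_one]
    have := hpow 1
    rw [pow_one, mul_one] at this
    rw [this]
  have hlen2 : d 1 (h * h) = d p (g ^ k * (g ^ k * p)) := by
    rw [← hd.inv p 1, mul_one]
    have := hpow 2
    rw [pow_two] at this
    rw [this, mul_comm k 2, pow_mul', pow_two, mul_assoc]
  rw [← hlen, ← hlen2, hd.len_mul h h] at hp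
  set C₀ := gp d 1 h⁻¹ h with hC₀
  have hC₀0 : 0 ≤ C₀ := hd.gp_nonneg _ _ _
  have hcorner : Corner d C₀ (d 1 h) h h := ⟨le_rfl, le_rfl, le_rfl⟩
  have hch : ∀ q : ℕ, (List.replicate q h).IsChain (Corner d C₀ (d 1 h)) :=
    fun q => List.isChain_replicate_of_rel _ hcorner
  have hmain : ∀ q r : ℕ, gp d 1 (h ^ q)⁻¹ (h ^ r) ≤ C₀ + 2 * δ := by
    intro q r
    rcases q with _ | q
    · have := hd.gp_le_left 1 (h ^ 0)⁻¹ (h ^ r)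
      rw [pow_zero, inv_one, hd.self] at this
      rw [pow_zero, inv_one]
      push_cast at this
      linarith
    rcases r with _ | r
    · have := hd.gp_le_right 1 (h ^ (q + 1))⁻¹ (h ^ 0)
      rw [pow_zero, hd.self] at this
      rw [pow_zero]
      push_cast at this
      linarith
    have := hd.gp_chain_le (A := List.replicate q h) (B := List.replicate r h) hC₀0
      (by linarith) (by rw [← List.replicate_succ']; exact hch _)
      (by rw [← List.replicate_succ]; exact hch _) hcorner
    rw [← List.replicate_succ', ← List.replicate_succ, List.prod_replicate,
      List.prod_replicate] at this
    exact this
  set D : ℕ := ∑ r ∈ Finset.range k, (d (g ^ r) p + d (g ^ r)⁻¹ p) with hD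
  have hDr : ∀ r < k, d (g ^ r) p + d (g ^ r)⁻¹ p ≤ D := fun r hr =>
    Finset.single_le_sum (f := fun r => d (g ^ r) p + d (g ^ r)⁻¹ p) (fun _ _ => Nat.zero_le _)
      (Finset.mem_range.2 hr)
  have hinvpow : ∀ q : ℕ, p * (h ^ q)⁻¹ = (g ^ (k * q))⁻¹ * p := by
    intro q
    have h1 : h ^ q = p⁻¹ * (g ^ (k * q) * p) := by rw [← hpow q]; group
    rw [h1]; group
  have hpos : ∀ i : ℕ, (d (g ^ i) (p * h ^ (i / k)) : ℝ) ≤ D := by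
    intro i
    have : d (g ^ i) (p * h ^ (i / k)) = d (g ^ (i % k)) p := by
      rw [hpow, ← hd.inv (g ^ (k * (i / k))) (g ^ (i % k)), ← pow_add, Nat.div_add_mod]
    have h2 := hDr (i % k) (Nat.mod_lt _ hk)
    rw [this]
    exact_mod_cast (by omega)
  have hneg : ∀ i : ℕ, (d (g ^ i)⁻¹ (p * (h ^ (i / k))⁻¹) : ℝ) ≤ D := by
    intro i
    have : d (g ^ i)⁻¹ (p * (h ^ (i / k))⁻¹) = d (g ^ (i % k))⁻¹ p := by
      rw [hinvpow, ← hd.inv (g ^ (k * (i / k)))⁻¹ (g ^ (i % k))⁻¹, ← mul_inv_rev, ← pow_add,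
        Nat.mod_add_div]
    have h2 := hDr (i % k) (Nat.mod_lt _ hk)
    rw [this]
    exact_mod_cast (by omega)
  refine ⟨C₀ + 2 * δ + d 1 p + D + D, fun i j => ?_⟩
  have s1 := hd.gp_lip_left 1 (g ^ i)⁻¹ (p * (h ^ (i / k))⁻¹) (g ^ j)
  have s2 := hd.gp_lip_right 1 (p * (h ^ (i / k))⁻¹) (g ^ j) (p * h ^ (j / k))
  have s3 := hd.gp_lip_base 1 p (p * (h ^ (i / k))⁻¹) (p * h ^ (j / k))
  have s4 := hd.gp_mul p 1 (h ^ (i / k))⁻¹ (h ^ (j / k))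
  rw [mul_one] at s4
  have s5 := hmain (i / k) (j / k)
  have s6 := hneg i
  have s7 := hpos j
  linarith
end HypGeom

/-! ### Powers of two elements with disjoint fixed points -/

namespace HypGeom

variable {d : G → G → ℕ} {δ : ℝ} {C L : ℝ}

lemma exists_le_len_pow (hd : HypGeom d δ) {a : G} (ha : ¬ IsOfFinOrder a) (M : ℝ) :
    ∃ N : ℕ, ∀ n ≥ N, M ≤ d 1 (a ^ n) := by
  have hinj := injective_pow_iff_not_isOfFinOrder.2 ha
  have hfin : ((fun n : ℕ => a ^ n) ⁻¹' {x | d 1 x ≤ ⌈M⌉₊}).Finite :=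
    (hd.ball ⌈M⌉₊).preimage hinj.injOn
  obtain ⟨B, hB⟩ := hfin.bddAbove
  refine ⟨B + 1, fun n hn => ?_⟩
  by_contra! hlt
  have h1 : d 1 (a ^ n) ≤ ⌈M⌉₊ := by
    have := hlt.le.trans (Nat.le_ceil M)
    exact_mod_cast this
  have : n ≤ B := hB h1
  omega

lemma convAtInf_pow (hd : HypGeom d δ) {a : G} (ha : ¬ IsOfFinOrder a) :
    ConvAtInf d (fun n : ℕ => a ^ n) := by
  intro M
  obtain ⟨C, hC⟩ := hd.exists_gp_neg_pos_le ha
  obtain ⟨N, hN⟩ := hd.exists_le_len_pow ha (M + C)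
  have key : ∀ i j, N ≤ i → i ≤ j → M ≤ gp d 1 (a ^ i) (a ^ j) := by
    intro i j hi hij
    have h1 := hd.gp_flip (a ^ i) (a ^ (j - i))
    rw [← pow_add, Nat.add_sub_cancel' hij] at h1
    have h2 := hN i hi
    have h3 := hC i (j - i)
    linarith
  refine ⟨N, fun i hi j hj => ?_⟩
  rcases le_total i j with h | h
  · exact key i j hi h
  · show M ≤ gp d 1 (a ^ i) (a ^ j)
    rw [hd.gp_comm]; exact key j i hj h

/-- Sequences converging to distinct boundary points have bounded Gromov products. -/
lemma exists_gp_le_of_not_seqEquiv (hd : HypGeom d δ) {x y : ℕ → G} (hx : ConvAtInf d x)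
    (hy : ConvAtInf d y) (hxy : ¬ SeqEquiv d x y) :
    ∃ C : ℝ, 0 ≤ C ∧ ∀ i j, gp d 1 (x i) (y j) ≤ C := by
  have hδ := hd.nonneg
  simp only [SeqEquiv, not_forall, not_exists, not_le] at hxy
  obtain ⟨M, hM⟩ := hxy
  obtain ⟨N₁, hN₁⟩ := hx (M + 2 * δ + 1)
  obtain ⟨N₂, hN₂⟩ := hy (M + 2 * δ + 1)
  set N := max N₁ N₂ with hN
  obtain ⟨i₀, hi₀, j₀, hj₀, h₀⟩ := hM N
  set D : ℕ := ∑ i ∈ Finset.range N, (d 1 (x i) + d 1 (y i)) with hD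
  have hDi : ∀ i < N, d 1 (x i) + d 1 (y i) ≤ D := fun i hi =>
    Finset.single_le_sum (f := fun i => d 1 (x i) + d 1 (y i)) (fun _ _ => Nat.zero_le _)
      (Finset.mem_range.2 hi)
  have hD0 : (0 : ℝ) ≤ D := Nat.cast_nonneg _
  refine ⟨|M| + 2 * δ + D, by positivity, fun i j => ?_⟩
  have hMabs := le_abs_self M
  have hMabs' := abs_nonneg M
  by_cases hi : N ≤ i
  · by_cases hj : N ≤ j
    · have a1 := hN₁ i₀ (le_of_max_le_left hi₀) i (le_of_max_le_left hi)
      have a2 := hN₂ j₀ (le_of_max_le_right hj₀) j (le_of_max_le_right hj)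
      have b1 := hd.gp_le_of_left h₀.le (show M + δ < gp d 1 (x i₀) (x i) by linarith)
      have b2 := hd.gp_le_of_left b1 (show M + δ + δ < gp d 1 (y j₀) (y j) by linarith)
      linarith
    · have h1 := hd.gp_le_right 1 (x i) (y j)
      have h2 : (d 1 (y j) : ℝ) ≤ D := by
        have := hDi j (by omega)
        exact_mod_cast (by omega)
      linarith
  · have h1 := hd.gp_le_left 1 (x i) (y j)
    have h2 : (d 1 (x i) : ℝ) ≤ D := by
      have := hDi i (by omega)
      exact_mod_cast (by omega)
    linarith

lemma exists_gp_zpow_le (hd : HypGeom d δ) {a b : G} (ha : ¬ IsOfFinOrder a)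
    (hb : ¬ IsOfFinOrder b)
    (hdisj : ∀ s t : ℤ, (s = 1 ∨ s = -1) → (t = 1 ∨ t = -1) →
      ¬ SeqEquiv d (fun n : ℕ => a ^ (s * n)) (fun n : ℕ => b ^ (t * n))) :
    ∃ C : ℝ, ∀ e f : ℤ, gp d 1 (a ^ e) (b ^ f) ≤ C := by
  have hconv : ∀ {x : G}, ¬ IsOfFinOrder x → ∀ s : ℤ, (s = 1 ∨ s = -1) →
      ConvAtInf d (fun n : ℕ => x ^ (s * n)) := by
    intro x hx s hs
    have e : (fun n : ℕ => x ^ (s * n)) = fun n : ℕ => (x ^ s) ^ n := by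
      funext n; rw [zpow_mul, zpow_natCast]
    rw [e]
    apply hd.convAtInf_pow
    rcases hs with rfl | rfl <;> simpa using hx
  have key : ∀ s t : ℤ, (s = 1 ∨ s = -1) → (t = 1 ∨ t = -1) → ∃ C : ℝ, 0 ≤ C ∧
      ∀ i j : ℕ, gp d 1 (a ^ (s * i)) (b ^ (t * j)) ≤ C := fun s t hs ht =>
    hd.exists_gp_le_of_not_seqEquiv (hconv ha s hs) (hconv hb t ht) (hdisj s t hs ht)
  obtain ⟨C₁, p₁, h₁⟩ := key 1 1 (by simp) (by simp)
  obtain ⟨C₂, p₂, h₂⟩ := key 1 (-1) (by simp) (by simp)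
  obtain ⟨C₃, p₃, h₃⟩ := key (-1) 1 (by simp) (by simp)
  obtain ⟨C₄, p₄, h₄⟩ := key (-1) (-1) (by simp) (by simp)
  refine ⟨C₁ + C₂ + C₃ + C₄, fun e f => ?_⟩
  obtain ⟨i, rfl | rfl⟩ := e.eq_nat_or_neg <;> obtain ⟨j, rfl | rfl⟩ := f.eq_nat_or_neg
  · have := h₁ i j; simp only [one_mul] at this; linarith
  · have := h₂ i j; simp only [one_mul, neg_mul] at this; linarith
  · have := h₃ i j; simp only [one_mul, neg_mul] at this; linarith
  · have := h₄ i j; simp only [one_mul, neg_mul] at this; linarith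

/-- All corners between powers of `g 0` and `g 1`, except for backtracking ones, are bounded by
one constant. -/
lemma exists_corner_bound (hd : HypGeom d δ) (g : Fin 2 → G) (hord : ∀ c, ¬ IsOfFinOrder (g c))
    (hdisj : ∀ s t : ℤ, (s = 1 ∨ s = -1) → (t = 1 ∨ t = -1) →
      ¬ SeqEquiv d (fun n : ℕ => g 0 ^ (s * n)) (fun n : ℕ => g 1 ^ (t * n))) :
    ∃ C : ℝ, 0 ≤ C ∧ ∀ x y : Fin 2 × ℤ, (x.1 = y.1 → 0 < x.2 * y.2) →
      gp d 1 (g x.1 ^ x.2)⁻¹ (g y.1 ^ y.2) ≤ C := by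
  obtain ⟨C, hC⟩ := hd.exists_gp_zpow_le (hord 0) (hord 1) hdisj
  choose E hE using fun c => hd.exists_gp_neg_pos_le (hord c)
  have hC0 : 0 ≤ C := (hd.gp_nonneg _ _ _).trans (hC 0 0)
  have hE0 : ∀ c, 0 ≤ E c := fun c => (hd.gp_nonneg _ _ _).trans (hE c 0 0)
  have hself : ∀ (c : Fin 2) (e f : ℤ), 0 < e * f → gp d 1 (g c ^ e)⁻¹ (g c ^ f) ≤ E c := by
    intro c e f hef
    rcases mul_pos_iff.1 hef with ⟨h1, h2⟩ | ⟨h1, h2⟩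
    · lift e to ℕ using h1.le
      lift f to ℕ using h2.le
      simpa using hE c e f
    · obtain ⟨i, rfl⟩ : ∃ i : ℕ, e = -i := ⟨e.natAbs, by omega⟩
      obtain ⟨j, rfl⟩ : ∃ j : ℕ, f = -j := ⟨f.natAbs, by omega⟩
      rw [hd.gp_comm]
      simpa using hE c j i
  have e0 := hE0 0
  have e1 := hE0 1
  refine ⟨C + E 0 + E 1, by linarith, ?_⟩
  rintro ⟨c, e⟩ ⟨c', f⟩ h
  simp only at h ⊢
  rw [← zpow_neg]
  fin_cases c <;> fin_cases c' <;> simp only [Fin.zero_eta, Fin.mk_one] at h ⊢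
  · have := hself 0 e f (h trivial); rw [← zpow_neg] at this; linarith
  · have := hC (-e) f; linarith
  · have := hC f (-e); rw [hd.gp_comm]; linarith
  · have := hself 1 e f (h trivial); rw [← zpow_neg] at this; linarith

lemma exists_le_len_zpow (hd : HypGeom d δ) (g : Fin 2 → G) (hord : ∀ c, ¬ IsOfFinOrder (g c))
    (L : ℝ) : ∃ M : ℕ, 0 < M ∧ ∀ (c : Fin 2) (e : ℤ), M ≤ e.natAbs → L ≤ d 1 (g c ^ e) := by
  choose N hN using fun c => hd.exists_le_len_pow (hord c) L
  refine ⟨N 0 + N 1 + 1, by omega, fun c e he => ?_⟩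
  have hc : N c ≤ e.natAbs := by fin_cases c <;> simp <;> omega
  have := hN c _ hc
  obtain ⟨i, rfl | rfl⟩ := e.eq_nat_or_neg
  · simpa using this
  · rw [zpow_neg, hd.len_inv]; simpa using this

end HypGeom

/-! ### Words in large powers -/

/-- The group element `g c ^ e` represented by the syllable `(c, e)`. -/
def syl (g : Fin 2 → G) (x : Fin 2 × ℤ) : G := g x.1 ^ x.2

/-- Two syllables with exponents of absolute value at least `M` which do not backtrack. -/
def Follow (M : ℕ) (x y : Fin 2 × ℤ) : Prop :=
  (x.1 = y.1 → 0 < x.2 * y.2) ∧ M ≤ x.2.natAbs ∧ M ≤ y.2.natAbs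

/-- The syllable of the `m`-th power of a letter of the free group, where `(c, true)` is the
generator `c` and `(c, false)` its inverse. -/
def powSyl (m : ℕ) (x : Fin 2 × Bool) : Fin 2 × ℤ := (x.1, if x.2 then (m : ℤ) else -m)

lemma follow_powSyl {M m : ℕ} (hM : 0 < M) (hm : M ≤ m) {x y : Fin 2 × Bool}
    (h : x.1 = y.1 → x.2 = y.2) : Follow M (powSyl m x) (powSyl m y) := by
  obtain ⟨c, b⟩ := x
  obtain ⟨c', b'⟩ := y
  have hpos : (0 : ℤ) < m := by exact_mod_cast (hM.trans_le hm)
  refine ⟨fun hc => ?_, ?_, ?_⟩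
  · have : b = b' := h hc
    subst this
    have hsq := mul_pos hpos hpos
    cases b <;> simpa [powSyl] using hsq
  · cases b <;> simpa [powSyl] using hm
  · cases b' <;> simpa [powSyl] using hm

lemma chain_powSyl {M m : ℕ} (hM : 0 < M) (hm : M ≤ m) {l : List (Fin 2 × Bool)}
    (hl : FreeGroup.IsReduced l) : (l.map (powSyl m)).IsChain (Follow M) := by
  rw [List.isChain_map]
  exact List.IsChain.imp (fun _ _ h => follow_powSyl hM hm h) hl

lemma lift_mk_eq_prod (g : Fin 2 → G) (m : ℕ) (l : List (Fin 2 × Bool)) :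
    FreeGroup.lift (fun c => g c ^ m) (FreeGroup.mk l) =
      ((l.map (powSyl m)).map (syl g)).prod := by
  rw [FreeGroup.lift_mk, List.map_map]
  congr 2
  funext x
  obtain ⟨c, b⟩ := x
  cases b <;> simp [powSyl, syl]

/-- A syllable `(c, e₁ + e₂)` of a chain may be cut into `(c, e₁)` and `(c, e₂)`. -/
lemma split_chain {M : ℕ} {A B : List (Fin 2 × ℤ)} {c : Fin 2} {e₁ e₂ : ℤ}
    (h : (A ++ (c, e₁ + e₂) :: B).IsChain (Follow M)) (he : 0 < e₁ * e₂)
    (h₁ : M ≤ e₁.natAbs) (h₂ : M ≤ e₂.natAbs) :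
    (A ++ [(c, e₁)]).IsChain (Follow M) ∧ ((c, e₂) :: B).IsChain (Follow M) ∧
      Follow M (c, e₁) (c, e₂) := by
  rw [List.isChain_append] at h
  obtain ⟨hA, hB, hAB⟩ := h
  rw [List.isChain_cons] at hB
  refine ⟨?_, ?_, fun _ => he, h₁, h₂⟩
  · rw [List.isChain_append]
    refine ⟨hA, by simp, fun x hx y hy => ?_⟩
    obtain rfl : (c, e₁) = y := by simpa using hy
    have hf := hAB x hx (c, e₁ + e₂) (by simp)
    refine ⟨fun hc => ?_, hf.2.1, h₁⟩
    have hp := hf.1 hc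
    simp only at hp ⊢
    rcases mul_pos_iff.1 he with h' | h' <;> rcases mul_pos_iff.1 hp with h'' | h''
    · exact mul_pos h''.1 h'.1
    · omega
    · omega
    · exact mul_pos_of_neg_of_neg h''.1 h'.1
  · rw [List.isChain_cons]
    refine ⟨fun y hy => ?_, hB.2⟩
    have hf := hB.1 y hy
    refine ⟨fun hc => ?_, h₂, hf.2.2⟩
    have hp := hf.1 hc
    simp only at hp ⊢
    rcases mul_pos_iff.1 he with h' | h' <;> rcases mul_pos_iff.1 hp with h'' | h''
    · exact mul_pos h'.2 h''.2
    · omega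
    · omega
    · exact mul_pos_of_neg_of_neg h'.2 h''.2

/-- The data of two elements whose long powers form only small corners: `C` bounds all corners
without backtracking, and exponents of absolute value at least `M` give steps which are long in
comparison with `C`. -/
structure PowerBounds (d : G → G → ℕ) (δ : ℝ) (g : Fin 2 → G) (C L : ℝ) (M : ℕ) : Prop where
  C_nonneg : 0 ≤ C
  L_large : 2 * C + 3 * δ + 1 ≤ L
  M_pos : 0 < M
  corner : ∀ x y : Fin 2 × ℤ, (x.1 = y.1 → 0 < x.2 * y.2) → gp d 1 (syl g x)⁻¹ (syl g y) ≤ C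
  long : ∀ x : Fin 2 × ℤ, M ≤ x.2.natAbs → L ≤ d 1 (syl g x)

namespace HypGeom

variable {d : G → G → ℕ} {δ : ℝ} {C L : ℝ} {g : Fin 2 → G} {M : ℕ}

lemma exists_powerBounds (hd : HypGeom d δ) (g : Fin 2 → G) (hord : ∀ c, ¬ IsOfFinOrder (g c))
    (hdisj : ∀ s t : ℤ, (s = 1 ∨ s = -1) → (t = 1 ∨ t = -1) →
      ¬ SeqEquiv d (fun n : ℕ => g 0 ^ (s * n)) (fun n : ℕ => g 1 ^ (t * n))) :
    ∃ C L M, PowerBounds d δ g C L M := by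
  obtain ⟨C, hC0, hC⟩ := hd.exists_corner_bound g hord hdisj
  obtain ⟨M, hM0, hM⟩ := hd.exists_le_len_zpow g hord (2 * C + 3 * δ + 1)
  exact ⟨C, _, M, hC0, le_rfl, hM0, hC, fun x hx => hM _ _ hx⟩

lemma chain_syl (hb : PowerBounds d δ g C L M) {l : List (Fin 2 × ℤ)}
    (hl : l.IsChain (Follow M)) : (l.map (syl g)).IsChain (Corner d C L) := by
  rw [List.isChain_map]
  exact hl.imp fun x y h => ⟨hb.corner x y h.1, hb.long x h.2.1, hb.long y h.2.2⟩

/-- For large `m` the powers `g 0 ^ m` and `g 1 ^ m` freely generate. -/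
lemma lift_injective (hd : HypGeom d δ) (hb : PowerBounds d δ g C L M) {m : ℕ} (hm : M ≤ m) :
    Function.Injective (FreeGroup.lift (fun c => g c ^ m)) := by
  rw [injective_iff_map_eq_one]
  intro w hw
  by_contra hne
  have hδ := hd.nonneg
  have hlm := hb.L_large
  have hmk := lift_mk_eq_prod g m w.toWord
  rw [FreeGroup.mk_toWord, hw] at hmk
  have hch := chain_syl hb (chain_powSyl hb.M_pos hm (FreeGroup.isReduced_toWord (x := w)))
  rcases hw' : w.toWord with _ | ⟨x, l⟩
  · exact hne (FreeGroup.toWord_eq_nil_iff.1 hw')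
  · rw [hw'] at hmk hch
    simp only [List.map_cons] at hmk hch
    have h1 := hd.length_le_of_chain hb.C_nonneg (by linarith) _ _
      (hb.long _ (by obtain ⟨c, b⟩ := x; cases b <;> simpa [powSyl] using hm)) hch
    rw [← hmk, hd.self, List.length_cons] at h1
    push_cast at h1
    have : (0 : ℝ) ≤ ((l.map (powSyl m)).map (syl g)).length := Nat.cast_nonneg _
    linarith

/-- The axis of a cyclically reduced word `U` starting with the syllable `(c, e₁ + e₂)`: a point
`U ^ N * g c ^ e₁` inside the first syllable of a period in the middle is seen from far away
endpoints `1` and `U ^ (2 * N)` under a Gromov product bounded independently of `U`. -/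
lemma exists_axis_split (hd : HypGeom d δ) (hb : PowerBounds d δ g C L M)
    {c : Fin 2} {e₁ e₂ : ℤ} {B : List (Fin 2 × ℤ)} {U : G}
    (hU : U = (((c, e₁ + e₂) :: B).map (syl g)).prod)
    (hper : ∀ n : ℕ, (List.replicate n ((c, e₁ + e₂) :: B)).flatten.IsChain (Follow M))
    (he : 0 < e₁ * e₂) (h₁ : M ≤ e₁.natAbs) (h₂ : M ≤ e₂.natAbs) (N : ℕ) :
    ∃ Q : G, U ^ N * g c ^ e₁ * Q = U ^ (2 * N + 1) ∧
      gp d 1 (U ^ N * g c ^ e₁)⁻¹ Q ≤ C + 2 * δ ∧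
      (N : ℝ) ≤ d 1 (U ^ N * g c ^ e₁) ∧ (N : ℝ) ≤ d 1 Q := by
  have hδ := hd.nonneg
  have hlm := hb.L_large
  set s : Fin 2 × ℤ := (c, e₁ + e₂) with hs
  set A := (List.replicate N (s :: B)).flatten with hA
  have hfull := hper (N + (N + 1))
  rw [List.replicate_add, List.flatten_append, List.replicate_succ, List.flatten_cons,
    List.cons_append] at hfull
  obtain ⟨hc1, hc2, hc3⟩ := split_chain hfull he h₁ h₂
  have hAprod : (A.map (syl g)).prod = U ^ N := by
    rw [hA, List.map_flatten, List.prod_flatten, List.map_replicate, List.map_replicate,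
      List.prod_replicate, hU]
  have hAlen : N ≤ A.length := by
    rw [hA, List.length_flatten, List.map_replicate, List.sum_replicate, List.length_cons,
      smul_eq_mul]
    nlinarith
  replace hc1 := chain_syl hb hc1
  replace hc2 := chain_syl hb hc2
  have hc3' : Corner d C L (syl g (c, e₁)) (syl g (c, e₂)) :=
    ⟨hb.corner _ _ hc3.1, hb.long _ hc3.2.1, hb.long _ hc3.2.2⟩
  rw [List.map_append, List.map_singleton] at hc1
  rw [List.map_cons] at hc2
  have hP1 : (A.map (syl g) ++ [syl g (c, e₁)]).prod = U ^ N * g c ^ e₁ := by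
    rw [List.prod_append, hAprod, List.prod_singleton]; rfl
  have hmain := hd.gp_chain_le hb.C_nonneg (by linarith) hc1 hc2 hc3'
  rw [hP1] at hmain
  refine ⟨_, ?_, hmain, ?_, ?_⟩
  · rw [List.prod_cons, List.map_append, List.prod_append, ← hA, hAprod]
    have : g c ^ e₁ * (syl g (c, e₂) * (B.map (syl g)).prod) = U := by
      rw [hU, List.map_cons, List.prod_cons, ← mul_assoc]
      congr 1
      simp [syl, hs, zpow_add]
    calc U ^ N * g c ^ e₁ * (syl g (c, e₂) * ((B.map (syl g)).prod * U ^ N))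
        = U ^ N * (g c ^ e₁ * (syl g (c, e₂) * (B.map (syl g)).prod)) * U ^ N := by
          simp only [mul_assoc]
      _ = U ^ (2 * N + 1) := by rw [this, ← pow_succ, ← pow_add]; congr 1; omega
  · have := hd.length_le_of_chain hb.C_nonneg (by linarith) _ _
      (by rw [hd.len_inv]; exact hc3'.2.1) (hd.chain_inv hc1)
    rw [← hP1, ← hd.len_inv, List.prod_inv_reverse]
    simp only [List.map_append, List.map_singleton, List.reverse_append, List.reverse_singleton,
      List.singleton_append]
    refine le_trans ?_ this
    simp only [List.length_cons, List.length_reverse, List.length_map]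
    exact_mod_cast hAlen.trans (Nat.le_succ _)
  · have := hd.length_le_of_chain hb.C_nonneg (by linarith) _ _ hc3'.2.2 hc2
    refine le_trans ?_ this
    simp only [List.length_cons, List.length_append, List.length_map, ← hA]
    exact_mod_cast (by omega)

/-- If a conjugate `a U a⁻¹` lies in the quasiconvex subgroup `H`, then points on the translate
by `a` of the axis of `U` are close to `H`. -/
lemma exists_near_subgroup (hd : HypGeom d δ) {H : Subgroup G} {k : ℕ}
    (hk : ∀ (n : ℕ) (p : ℕ → G), IsGeodesicSeq d n p → p 0 ∈ (H : Set G) → p n ∈ (H : Set G) →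
      ∀ i ≤ n, ∃ a ∈ (H : Set G), d (p i) a ≤ k)
    {a U P Q : G} {n : ℕ} (hU : a * U * a⁻¹ ∈ H) (hPQ : P * Q = U ^ n)
    (hgp : gp d 1 P⁻¹ Q ≤ C) (hP : C + 2 * δ + d 1 a < d 1 P)
    (hQ : C + 2 * δ + d 1 a < d 1 Q) :
    ∃ q ∈ H, (d (a * P) q : ℝ) ≤ C + 4 * δ + 1 + k := by
  have hδ := hd.nonneg
  set y := (a * U * a⁻¹) ^ n with hy
  have hyH : y ∈ H := H.pow_mem hU n
  have hya : y * a = a * (P * Q) := by rw [hy, conj_pow, hPQ]; group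
  set z := a * P with hz
  have e1 : gp d z a (y * a) = gp d 1 P⁻¹ Q := by
    rw [← hd.gp_mul z 1, hya, hz]; simp [mul_assoc]
  have e2 : d z a = d 1 P := by
    rw [← hd.len_inv, ← hd.inv z 1]; simp [hz]
  have e3 : d z (y * a) = d 1 Q := by
    rw [← hd.inv z 1, hya, hz]; simp [mul_assoc]
  have e4 : d y (y * a) = d 1 a := by
    have := hd.inv y 1 a
    rwa [mul_one] at this
  rw [← e2] at hP
  rw [← e3] at hQ
  rw [← e1] at hgp
  have b1 : C + δ < gp d z a 1 := by
    have := hd.triR z 1 a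
    simp only [gp]
    rw [hd.comm a 1]
    linarith
  have c1 := hd.gp_le_of_left hgp b1
  have b2 : C + δ + δ < gp d z (y * a) y := by
    have := hd.triR z y (y * a)
    simp only [gp]
    rw [hd.comm (y * a) y, e4]
    rw [e4] at this
    linarith
  have c2 := hd.gp_le_of_left c1 b2
  obtain ⟨γ, hγ, h0, h1⟩ := hd.geo 1 y
  obtain ⟨i, hi, hzi⟩ := hd.exists_near_geodesic hγ h0 h1 z
  obtain ⟨q, hq, hqd⟩ := hk _ γ hγ (by rw [h0]; exact H.one_mem) (by rw [h1]; exact hyH) i hi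
  have hqd' : (d (γ i) q : ℝ) ≤ k := by exact_mod_cast hqd
  have := hd.triR z (γ i) q
  exact ⟨q, hq, by linarith⟩

/-- If `m` is large compared to the number of elements in a ball whose radius depends only on
the quasiconvexity constant of `H`, a conjugate of a nontrivial cyclically reduced word in
`g 0 ^ m` and `g 1 ^ m` cannot lie in `H`: otherwise a long segment `x * g c ^ j` of its axis
would stay close to `H`, and by the pigeonhole principle a power of `g c` would be conjugate into
`H`. -/
lemma conj_notMem (hd : HypGeom d δ) (hb : PowerBounds d δ g C L M) {H : Subgroup G} {k K : ℕ}
    (hk : ∀ (n : ℕ) (p : ℕ → G), IsGeodesicSeq d n p → p 0 ∈ (H : Set G) → p n ∈ (H : Set G) →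
      ∀ i ≤ n, ∃ a ∈ (H : Set G), d (p i) a ≤ k)
    (hK : C + 6 * δ + 1 + k ≤ K) {m : ℕ} (hm : 2 * M + (hd.ball K).toFinset.card ≤ m)
    (hpow : ∀ (c : Fin 2) (e : ℤ), e ≠ 0 → ∀ a : G, a * g c ^ e * a⁻¹ ∉ H)
    {r : List (Fin 2 × Bool)} (hr : FreeGroup.IsCyclicallyReduced r) (hne : r ≠ []) (a : G) :
    a * FreeGroup.lift (fun c => g c ^ m) (FreeGroup.mk r) * a⁻¹ ∉ H := by
  classical
  intro hmem
  have hδ := hd.nonneg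
  have hM := hb.M_pos
  set U := FreeGroup.lift (fun c => g c ^ m) (FreeGroup.mk r) with hU
  have hUr : U = ((r.map (powSyl m)).map (syl g)).prod := lift_mk_eq_prod g m r
  have hper : ∀ n : ℕ, (List.replicate n (r.map (powSyl m))).flatten.IsChain (Follow M) := by
    intro n
    have := chain_powSyl hM (show M ≤ m by omega) (hr.flatten_replicate n).isReduced
    rwa [List.map_flatten, List.map_replicate] at this
  obtain ⟨N, hN⟩ := exists_nat_gt (C + 2 * δ + 2 * δ + d 1 a)
  obtain ⟨⟨c, b⟩, B, rfl⟩ := List.exists_cons_of_ne_nil hne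
  -- the sign of the first syllable
  obtain ⟨σ, hσ, hσm⟩ : ∃ σ : ℤ, (σ = 1 ∨ σ = -1) ∧ powSyl m (c, b) = (c, σ * m) := by
    cases b
    · exact ⟨-1, by simp, by simp [powSyl]⟩
    · exact ⟨1, by simp, by simp [powSyl]⟩
  set F := (hd.ball K).toFinset with hF
  have hclose : ∀ j : ℕ, M ≤ j → j ≤ M + F.card →
      ∃ u ∈ F, a * (U ^ N * g c ^ (σ * j)) * u ∈ H := by
    intro j hj1 hj2
    have hsum : powSyl m (c, b) = (c, σ * j + σ * (m - j : ℕ)) := by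
      rw [hσm, ← mul_add]; congr 2; omega
    rw [List.map_cons, hsum] at hUr hper
    obtain ⟨Q, hPQ, hgp, hP, hQ⟩ := hd.exists_axis_split hb hUr hper
      (by
        have h1 : (0 : ℤ) < j := by omega
        have h2 : (0 : ℤ) < (m - j : ℕ) := by omega
        rcases hσ with rfl | rfl
        · rw [one_mul, one_mul]; exact mul_pos h1 h2
        · rw [neg_one_mul, neg_one_mul, neg_mul_neg]; exact mul_pos h1 h2)
      (by rcases hσ with rfl | rfl <;> omega) (by rcases hσ with rfl | rfl <;> omega) N
    obtain ⟨q, hq, hqd⟩ := hd.exists_near_subgroup hk hmem hPQ hgp (by linarith) (by linarith)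
    refine ⟨(a * (U ^ N * g c ^ (σ * j)))⁻¹ * q, ?_, by rwa [mul_inv_cancel_left]⟩
    rw [hF, Set.Finite.mem_toFinset]
    show d 1 _ ≤ K
    rw [← hd.inv (a * (U ^ N * g c ^ (σ * j))), mul_inv_cancel_left, mul_one]
    have : (d (a * (U ^ N * g c ^ (σ * j))) q : ℝ) ≤ K := by linarith
    exact_mod_cast this
  choose! u huF huH using hclose
  obtain ⟨i, hi, j, hj, hij, he⟩ := Finset.exists_ne_map_eq_of_card_lt_of_maps_to
    (s := Finset.Icc M (M + F.card)) (t := F) (f := u) (by rw [Nat.card_Icc]; omega)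
    (fun i hi => by
      have hi := Finset.mem_Icc.1 hi
      exact huF i hi.1 hi.2)
  rw [Finset.mem_Icc] at hi hj
  have h1 := huH i hi.1 hi.2
  have h2 := huH j hj.1 hj.2
  rw [← he] at h2
  have h3 := H.mul_mem (H.inv_mem h1) h2
  have e : (a * (U ^ N * g c ^ (σ * i)) * u i)⁻¹ * (a * (U ^ N * g c ^ (σ * j)) * u i) =
      (u i)⁻¹ * g c ^ (σ * j - σ * i) * ((u i)⁻¹)⁻¹ := by
    rw [sub_eq_neg_add, zpow_add, zpow_neg]
    simp only [mul_inv_rev, inv_inv, mul_assoc, inv_mul_cancel_left]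
  rw [e] at h3
  refine hpow c _ ?_ _ h3
  rcases hσ with rfl | rfl <;> omega

end HypGeom

/-- **(Criterion for pingpong pairs.)**  Let `G` be a nonelementary hyperbolic group and
`H₁, …, H_l` infinite quasiconvex subgroups.  Let `g₁, g₂ ∈ G` be infinite order elements
whose fixed point sets `{g₁^{±∞}}`, `{g₂^{±∞}}` in `∂G` are disjoint (no forward/backward
orbit sequence of `g₁` is equivalent to one of `g₂`), and suppose no nonzero power of
`g₁` or `g₂` is conjugate in `G` to an element of any `H_i`.  Then there is `m ∈ ℕ` such
that `⟨g₁ᵐ, g₂ᵐ⟩` is free of rank `2` and meets every conjugate `g⁻¹H_i g` trivially. -/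
theorem pingpong_criterion
    {G : Type*} [Group G] (S : Finset G)
    (hgen : Subgroup.closure (S : Set G) = ⊤)
    (hhyp : IsHypDist (wdist (S : Set G)))
    (hGnonelem : ¬ VirtuallyCyclic G)
    (l : ℕ) (H : Fin l → Subgroup G)
    (hinf : ∀ i, ((H i : Set G)).Infinite)
    (hqc : ∀ i, IsQuasiconvex (wdist (S : Set G)) (H i : Set G))
    (g₁ g₂ : G) (h₁ : ¬ IsOfFinOrder g₁) (h₂ : ¬ IsOfFinOrder g₂)
    (hdisjoint : ∀ s t : ℤ, (s = 1 ∨ s = -1) → (t = 1 ∨ t = -1) →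
      ¬ SeqEquiv (wdist (S : Set G))
          (fun n : ℕ => g₁ ^ (s * n)) (fun n : ℕ => g₂ ^ (t * n)))
    (hpow₁ : ∀ m : ℤ, m ≠ 0 → ∀ (a : G) (i : Fin l), a * g₁ ^ m * a⁻¹ ∉ H i)
    (hpow₂ : ∀ m : ℤ, m ≠ 0 → ∀ (a : G) (i : Fin l), a * g₂ ^ m * a⁻¹ ∉ H i) :
    ∃ m : ℕ, 0 < m ∧
      Nonempty (Subgroup.closure ({g₁ ^ m, g₂ ^ m} : Set G) ≃* FreeGroup (Fin 2)) ∧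
      ∀ (g : G) (i : Fin l),
        Subgroup.closure ({g₁ ^ m, g₂ ^ m} : Set G) ⊓ ConjAct.toConjAct g⁻¹ • H i = ⊥ := by
  classical
  obtain ⟨δ, hδ, hyp⟩ := hhyp
  have hd := hypGeom_wdist S hgen hδ hyp
  set g : Fin 2 → G := ![g₁, g₂] with hg
  have hord : ∀ c, ¬ IsOfFinOrder (g c) := by
    intro c; fin_cases c
    exacts [h₁, h₂]
  have hpow : ∀ i (c : Fin 2) (e : ℤ), e ≠ 0 → ∀ a : G, a * g c ^ e * a⁻¹ ∉ H i := by
    intro i c e he a; fin_cases c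
    exacts [hpow₁ e he a i, hpow₂ e he a i]
  obtain ⟨C, L, M, hb⟩ := hd.exists_powerBounds g hord hdisjoint
  choose k hk using hqc
  obtain ⟨K₀, hK₀⟩ := exists_nat_ge (C + 6 * δ + 1)
  set K := K₀ + ∑ i, k i with hK
  have hKi : ∀ i, C + 6 * δ + 1 + k i ≤ K := by
    intro i
    have h1 : k i ≤ ∑ i, k i := Finset.single_le_sum (fun _ _ => Nat.zero_le _) (Finset.mem_univ i)
    have h2 : (k i : ℝ) ≤ (∑ i, k i : ℕ) := by exact_mod_cast h1
    rw [hK, Nat.cast_add]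
    linarith
  set m := 2 * M + (hd.ball K).toFinset.card with hm
  have hM := hb.M_pos
  have hinj := hd.lift_injective hb (show M ≤ m by omega)
  have hrange : (FreeGroup.lift (fun c => g c ^ m)).range =
      Subgroup.closure ({g₁ ^ m, g₂ ^ m} : Set G) := by
    rw [FreeGroup.range_lift_eq_closure]
    congr 1
    ext x
    simp [hg, Fin.exists_fin_two, eq_comm]
  refine ⟨m, by omega, ?_, fun a i => ?_⟩
  · rw [← hrange]
    exact ⟨(MonoidHom.ofInjective hinj).symm⟩
  · rw [← hrange, eq_bot_iff]
    rintro x ⟨⟨w, rfl⟩, hx⟩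
    replace hx : FreeGroup.lift (fun c => g c ^ m) w ∈ ConjAct.toConjAct a⁻¹ • H i := hx
    rw [Subgroup.mem_pointwise_smul_iff_inv_smul_mem, ConjAct.smul_def] at hx
    simp only [map_inv, inv_inv, ConjAct.ofConjAct_toConjAct] at hx
    by_contra hne
    set v := FreeGroup.reduceCyclically.conjugator w.toWord with hv
    set r := FreeGroup.reduceCyclically w.toWord with hr
    have hw : FreeGroup.mk v * FreeGroup.mk r * (FreeGroup.mk v)⁻¹ = w := by
      rw [FreeGroup.inv_mk, FreeGroup.mul_mk, FreeGroup.mul_mk,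
        FreeGroup.reduceCyclically.conj_conjugator_reduceCyclically, FreeGroup.mk_toWord]
    have hrne : r ≠ [] := by
      intro h0
      apply hne
      rw [h0] at hw
      have h1 : w = 1 := by rw [← hw, ← FreeGroup.one_eq_mk]; group
      rw [h1, map_one]
      exact Subgroup.one_mem _
    refine hd.conj_notMem hb (hk i) (hKi i) le_rfl (hpow i)
      (FreeGroup.reduceCyclically.isCyclicallyReduced FreeGroup.isReduced_toWord) hrne
      (a * FreeGroup.lift (fun c => g c ^ m) (FreeGroup.mk v)) ?_
    rw [← hw, map_mul, map_mul, map_inv] at hx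
    simpa only [mul_inv_rev, mul_assoc] using hx

end HypPaper
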